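/- The only 6-tuple (h₁₂, h₁₃, h₁₄, h₂₃, h₂₄, h₃₄) of polynomials in S = ℚ[s,u,t,v], each bihomogeneous of bidegree (3,2), that is a Koszul 2-cycle for (f₁,f₂,f₃,f₄) — i.e., such that the element Σ_{i<j} h_{ij} e_i ∧ e_j is annihilated by contraction with (f₁,f₂,f₃,f₄), equivalently for each k ∈ {1,2,3,4}: Σ_{i<k} h_{ik} f_i − Σ_{j>k} h_{kj} f_j = 0 — is the zero tuple. -/

import Mathlib

/-!
The determinantal reason for the vanishing is the Sylvester-type formula for the resultant on
`ℙ¹ × ℙ¹`: for three forms of bidegree `(2,3)`, the map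
`(a, b, c) ↦ a f₁ + b f₃ + c f₄` from triples of bidegree `(3,2)` to bidegree `(5,5)` is given by a
`36 × 36` matrix whose determinant vanishes exactly when the forms have a common zero over
an algebraic closure. The forms `f₁, f₃, f₄` have none, so they admit no nonzero syzygy of bidegree `(3,2)` (`syzygy_eq_zero`).

This suffices: the second cycle equation is a syzygy of `f₁, f₃, f₄` and gives
`h₁₂ = h₂₃ = h₂₄ = 0`; then the third is one and gives `h₁₃ = h₃₄ = 0`; the fourth becomes
`h₁₄ f₁ = 0`.

Nonvanishing of the determinant is certified modulo `7`: an explicit integer matrix is a left inverse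
of the integer coefficient matrix modulo `7`, so the product has determinant `1` modulo `7`, hence a
nonzero determinant in characteristic zero (`injective_of_leftInverse_mod`). To read off the
coefficient matrix, bihomogeneous forms are turned into univariate polynomials by the Kronecker
substitution `s, t ↦ 1`, `u ↦ X`, `v ↦ X⁶`, under which the monomials of bidegree `(5,5)` go to the
distinct powers `1, X, …, X³⁵`.
-/

open MvPolynomial

/-- The polynomial ring `S = ℚ[s,u,t,v]`, with `X 0 = s`, `X 1 = u`, `X 2 = t`, `X 3 = v`. -/
noncomputable abbrev S : Type := MvPolynomial (Fin 4) ℚ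

noncomputable def s : S := X 0
noncomputable def u : S := X 1
noncomputable def t : S := X 2
noncomputable def v : S := X 3

/-- `f₁`, of bidegree `(2,3)`. -/
noncomputable def f1 : S :=
  s^2*t^3 + 2*s*u*t^3 + 3*u^2*t^3 + 4*s^2*t^2*v + 5*s*u*t^2*v + 6*u^2*t^2*v +
    7*s^2*t*v^2 + 8*s*u*t*v^2 + 9*u^2*t*v^2 + 10*s^2*v^3 + s*u*v^3 + 2*u^2*v^3

/-- `f₂`, of bidegree `(2,3)`. -/
noncomputable def f2 : S :=
  2*s^2*t^3 - 3*s^2*t^2*v + s*u*t^2*v - 3*u^2*t^2*v - s^2*t*v^2 + 3*s*u*t*v^2 +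
    2*u^2*t*v^2 - u^2*v^3

/-- `f₃`, of bidegree `(2,3)`. -/
noncomputable def f3 : S :=
  2*s^2*t^3 - 2*s*u*t^3 - 3*s^2*t^2*v + 5*s*u*t^2*v - 3*u^2*t^2*v + s^2*t*v^2 -
    3*s*u*t*v^2 + 4*u^2*t*v^2 - u^2*v^3

/-- `f₄`, of bidegree `(2,3)`. -/
noncomputable def f4 : S :=
  -2*s*u*t^3 + 3*s^2*t^2*v + s*u*t^2*v - u^2*t^2*v - s^2*t*v^2 - 3*s*u*t*v^2 +
    4*u^2*t*v^2 - u^2*v^3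

/-- The weight giving the degree in the variables `s, u`. -/
def wSU : Fin 4 → ℕ := ![1, 1, 0, 0]

/-- The weight giving the degree in the variables `t, v`. -/
def wTV : Fin 4 → ℕ := ![0, 0, 1, 1]

/-- A polynomial of `S = ℚ[s,u,t,v]` is bihomogeneous of bidegree `(a,b)` if it is
homogeneous of degree `a` in `s, u` and homogeneous of degree `b` in `t, v`. -/
def IsBihom (a b : ℕ) (p : S) : Prop :=
  IsWeightedHomogeneous wSU p a ∧ IsWeightedHomogeneous wTV p b

/-- The `ℚ`-subspace of `S` of bihomogeneous polynomials of bidegree `(a,b)`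
(together with `0`). -/
noncomputable def bihom (a b : ℕ) : Submodule ℚ S :=
  weightedHomogeneousSubmodule ℚ wSU a ⊓ weightedHomogeneousSubmodule ℚ wTV b

/-- The tuple `(f₁, f₂, f₃, f₄)`. -/
noncomputable def f : Fin 4 → S := ![f1, f2, f3, f4]

/-- The `ℚ`-linear map sending `(g₁,g₂,g₃,g₄)` to `g₁f₁ + g₂f₂ + g₃f₃ + g₄f₄`. -/
noncomputable def syz : (Fin 4 → S) →ₗ[ℚ] S :=
  ∑ i : Fin 4, (LinearMap.mulRight ℚ (f i)).comp (LinearMap.proj i)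

/-! ### Bihomogeneous forms and the Kronecker substitution -/

/-- The exponent vector of the monomial `s^(3-i) u^i t^(2-j) v^j` of bidegree `(3,2)`. -/
noncomputable def expo (x : Fin 4 × Fin 3) : Fin 4 →₀ ℕ :=
  Finsupp.equivFunOnFinite.symm ![3 - (x.1 : ℕ), x.1, 2 - (x.2 : ℕ), x.2]

lemma expo_injective : Function.Injective expo := by
  rintro ⟨i, j⟩ ⟨k, l⟩ h
  have h1 := DFunLike.congr_fun h 1
  have h3 := DFunLike.congr_fun h 3
  simp [expo] at h1 h3
  ext <;> simp <;> omega

lemma IsBihom.eq_sum {p : S} (h : IsBihom 3 2 p) :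
    p = ∑ x : Fin 4 × Fin 3, monomial (expo x) (p.coeff (expo x)) := by
  have hsub : p.support ⊆ Finset.univ.image expo := by
    intro m hm
    have hc := mem_support_iff.1 hm
    have h1 := h.1 hc
    have h2 := h.2 hc
    simp [Finsupp.weight_apply, Finsupp.sum_fintype, Fin.sum_univ_four, wSU, wTV] at h1 h2
    refine Finset.mem_image.2 ⟨(⟨m 1, by omega⟩, ⟨m 3, by omega⟩), Finset.mem_univ _, ?_⟩
    ext i
    fin_cases i <;> simp [expo] <;> omega
  conv_lhs => rw [p.as_sum]
  rw [Finset.sum_subset hsub, Finset.sum_image expo_injective.injOn]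
  intro m _ hm
  simp [notMem_support_iff.1 hm]

/-- The Kronecker substitution `s, t ↦ 1`, `u ↦ X`, `v ↦ X⁶`. -/
noncomputable def kron : S →ₐ[ℚ] Polynomial ℚ :=
  aeval ![1, Polynomial.X, 1, Polynomial.X ^ 6]

lemma kron_eq_sum {p : S} (h : IsBihom 3 2 p) :
    kron p = ∑ x : Fin 4 × Fin 3,
      Polynomial.C (p.coeff (expo x)) * Polynomial.X ^ ((x.1 : ℕ) + 6 * x.2) := by
  conv_lhs => rw [h.eq_sum]
  rw [map_sum]
  refine Finset.sum_congr rfl fun x _ => ?_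
  rw [kron, aeval_monomial, Finsupp.prod_fintype _ _ (by simp)]
  simp [Fin.prod_univ_four, expo, pow_add, pow_mul]

/-! ### The resultant matrix -/

/-- Coefficients of the Kronecker images of `f₁, f₃, f₄`, in increasing degree: entry `a + 6 b` is the
coefficient of `s^(2-a) u^a t^(3-b) v^b`. -/
def fList : Fin 3 → List ℤ := ![
  [1, 2, 3, 0, 0, 0, 4, 5, 6, 0, 0, 0, 7, 8, 9, 0, 0, 0, 10, 1, 2],
  [2, -2, 0, 0, 0, 0, -3, 5, -3, 0, 0, 0, 1, -3, 4, 0, 0, 0, 0, 0, -1],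
  [0, -2, 0, 0, 0, 0, 3, 1, -1, 0, 0, 0, -1, -3, 4, 0, 0, 0, 0, 0, -1]]

/-- The coefficient of `Xⁿ` in the Kronecker image of the `k`-th of `f₁, f₃, f₄`. -/
def fCoeff (k : Fin 3) (n : ℕ) : ℤ := (fList k).getD n 0

/-- The matrix of `(a, b, c) ↦ a f₁ + b f₃ + c f₄` from bidegree `(3,2)` to bidegree `(5,5)`. The
column `(k, i, j)` stands for the monomial with exponent vector `expo (i, j)` multiplying the `k`-th
form, and the row `n = a + 6 b` for the monomial `s^(5-a) u^a t^(5-b) v^b`. -/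
def resMat : Matrix (Fin 36) (Fin 3 × Fin 4 × Fin 3) ℤ := fun n x =>
  if (x.2.1 : ℕ) + 6 * x.2.2 ≤ n then fCoeff x.1 (n - (x.2.1 + 6 * x.2.2)) else 0

/-- The rows of a left inverse of `resMat` modulo `7`: the `n`-th decimal digit, counted from the
right, of a number is the entry in column `n`. -/
def invRows : List ℕ :=
  [164232410304025154244646631665236633,
   352042263662364454530454202422061422,
   5000000000000000000000000000000,
   311520006230563306443010442266516611,
   405600404556424110421600056326100363,
   53000000000000000000000000000000,
   614306632122612664041064230363552563,
   335021624352142306632655344055525400,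
   663160350126004051555531446361622310,
   500000,
   101515351226222441243140441426443624,
   530321435204426366436445053045620242,
   345626530205061315655454423441624426,
   504115412226214066053560022055516045,
   155120526313650106034546366262215224,
   605311214213140214663152333110523634,
   261233113224225361423614254461031365,
   246653020105240125541610560546636111,
   36620446651110455060021352211556462,
   2514156645664244510511126432011463,
   452415545360105111534102126416224114,
   412053000454245552332554425225663022,
   130520051034103550062255032310315613,
   542304235651264141061222101263213264,
   261534160462032556400314062460001445,
   6040621205156434221305142563415534,
   364106461051125614154354265051251013,
   533245462415131641153103056342045115,
   320242230063331242430034434114343520,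
   543436151626321100531402661503453155,
   445162265235461163204500266622244301,
   234062515305121526602540034225544326,
   624163520152322210235635042211240055,
   544126213156015444433242662603310406,
   562066302316135506241513162516261514,
   425345635520651514104661635520334220]

/-- The left inverse of `resMat` modulo `7` encoded by `invRows`. -/
def invMat : Matrix (Fin 3 × Fin 4 × Fin 3) (Fin 36) ℤ := fun x n =>
  ((invRows.getD (12 * x.1 + 3 * x.2.1 + x.2.2) 0 / 10 ^ (n : ℕ) % 10 : ℕ) : ℤ)

lemma invMat_mul_resMat_mod : ∀ x y : Fin 3 × Fin 4 × Fin 3,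
    (∑ n : Fin 36, invMat x n * resMat n y) % 7 = if x = y then 1 else 0 := by
  decide +kernel

lemma map_invMat_mul_resMat :
    (invMat * resMat).map (Int.castRingHom (ZMod 7)) = 1 := by
  ext x y
  have h := invMat_mul_resMat_mod x y
  have hcast : (((∑ n : Fin 36, invMat x n * resMat n y) : ℤ) : ZMod 7) =
      ((if x = y then 1 else 0 : ℤ) : ZMod 7) := by
    rw [← h]
    exact (ZMod.intCast_mod _ 7).symm
  rw [Matrix.map_apply, Matrix.mul_apply, Matrix.one_apply]
  simpa using hcast

/-- An integer matrix with a left inverse modulo some `p > 1` has trivial kernel over `ℚ`. -/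
lemma injective_of_leftInverse_mod {m n : Type*} [Fintype m] [Fintype n] [DecidableEq n]
    (p : ℕ) [Fact (1 < p)] (N : Matrix n m ℤ) (M : Matrix m n ℤ)
    (h : (N * M).map (Int.castRingHom (ZMod p)) = 1) (x : n → ℚ)
    (hx : (M.map (Int.castRingHom ℚ)).mulVec x = 0) : x = 0 := by
  have hdet : (N * M).det ≠ 0 := by
    intro h0
    have h1 := RingHom.map_det (Int.castRingHom (ZMod p)) (N * M)
    rw [RingHom.mapMatrix_apply, h, h0, Matrix.det_one, map_zero] at h1
    exact zero_ne_one h1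
  refine Matrix.eq_zero_of_mulVec_eq_zero (M := (N * M).map (Int.castRingHom ℚ)) ?_ ?_
  · have h1 := RingHom.map_det (Int.castRingHom ℚ) (N * M)
    rw [RingHom.mapMatrix_apply] at h1
    rw [← h1]
    simpa using hdet
  · rw [Matrix.map_mul, ← Matrix.mulVec_mulVec, hx, Matrix.mulVec_zero]

/-! ### Syzygies of `f₁, f₃, f₄` -/

/-- The forms `f₁, f₃, f₄`. -/
noncomputable def form : Fin 3 → S := ![f1, f3, f4]

lemma coeff_kron_form (k : Fin 3) (n : ℕ) : (kron (form k)).coeff n = fCoeff k n := by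
  have key : kron (form k) =
      ∑ n ∈ Finset.range 21, Polynomial.C (fCoeff k n : ℚ) * Polynomial.X ^ n := by
    fin_cases k <;>
    · simp [form, kron, f1, f3, f4, s, u, t, v, fCoeff, fList, Finset.sum_range_succ]
      ring
  rw [key, Polynomial.finsetSum_coeff]
  simp only [Polynomial.coeff_C_mul_X_pow]
  rw [Finset.sum_ite_eq]
  split_ifs with hn
  · rfl
  · have : (fList k).length ≤ n := by
      rw [Finset.mem_range] at hn
      fin_cases k <;> simp [fList] <;> omega
    simp [fCoeff, this]

lemma coeff_kron_mul_form {p : S} (h : IsBihom 3 2 p) (k : Fin 3) (n : Fin 36) :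
    (kron (p * form k)).coeff n =
      ∑ x : Fin 4 × Fin 3, (resMat n (k, x) : ℚ) * p.coeff (expo x) := by
  rw [map_mul, kron_eq_sum h, Finset.sum_mul, Polynomial.finsetSum_coeff]
  refine Finset.sum_congr rfl fun x _ => ?_
  rw [mul_assoc, Polynomial.coeff_C_mul, Polynomial.coeff_X_pow_mul', coeff_kron_form, resMat,
    mul_comm]
  split_ifs <;> simp

/-- The resultant matrix of `f₁, f₃, f₄` is nonsingular: these forms have no nonzero syzygy of
bidegree `(3,2)`. -/
lemma syzygy_eq_zero {a b c : S} (ha : IsBihom 3 2 a) (hb : IsBihom 3 2 b) (hc : IsBihom 3 2 c)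
    (h : a * f1 + b * f3 + c * f4 = 0) : a = 0 ∧ b = 0 ∧ c = 0 := by
  let g : Fin 3 → S := ![a, b, c]
  have hg : ∀ k, IsBihom 3 2 (g k) := by
    intro k
    fin_cases k
    exacts [ha, hb, hc]
  have hsum : ∑ k, g k * form k = 0 := by simpa [g, form, Fin.sum_univ_three] using h
  have hx : (fun x : Fin 3 × Fin 4 × Fin 3 => (g x.1).coeff (expo x.2)) = 0 := by
    have : Fact (1 < 7) := ⟨by norm_num⟩
    refine injective_of_leftInverse_mod 7 invMat resMat map_invMat_mul_resMat _ ?_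
    ext n
    have hn : (kron (∑ k, g k * form k)).coeff n = 0 := by rw [hsum]; simp
    rw [map_sum, Polynomial.finsetSum_coeff,
      Finset.sum_congr rfl fun k _ => coeff_kron_mul_form (hg k) k n] at hn
    rw [← Fintype.sum_prod_type'
      (f := fun k x => (resMat n (k, x) : ℚ) * (g k).coeff (expo x))] at hn
    simpa [Matrix.mulVec, dotProduct] using hn
  have h0 : ∀ k, g k = 0 := by
    intro k
    rw [(hg k).eq_sum]
    refine Finset.sum_eq_zero fun x _ => ?_
    rw [show (g k).coeff (expo x) = 0 from congrFun hx (k, x), map_zero]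
  exact ⟨h0 0, h0 1, h0 2⟩

lemma IsBihom.zero (a b : ℕ) : IsBihom a b 0 :=
  ⟨isWeightedHomogeneous_zero _ _ _, isWeightedHomogeneous_zero _ _ _⟩

lemma IsBihom.neg {a b : ℕ} {p : S} (h : IsBihom a b p) : IsBihom a b (-p) :=
  ⟨(weightedHomogeneousSubmodule ℚ wSU a).neg_mem h.1,
    (weightedHomogeneousSubmodule ℚ wTV b).neg_mem h.2⟩

/-- The only 6-tuple `(h₁₂, h₁₃, h₁₄, h₂₃, h₂₄, h₃₄)` of polynomials of `S`, each
bihomogeneous of bidegree `(3,2)`, that is a Koszul 2-cycle for `(f₁,f₂,f₃,f₄)` —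
i.e. for each `k ∈ {1,2,3,4}` we have `Σ_{i<k} h_{ik} f_i − Σ_{j>k} h_{kj} f_j = 0` —
is the zero tuple. -/
theorem koszul_two_cycle_zero
    (h12 h13 h14 h23 h24 h34 : S)
    (b12 : IsBihom 3 2 h12) (b13 : IsBihom 3 2 h13) (b14 : IsBihom 3 2 h14)
    (b23 : IsBihom 3 2 h23) (b24 : IsBihom 3 2 h24) (b34 : IsBihom 3 2 h34)
    (c1 : -(h12 * f2) - h13 * f3 - h14 * f4 = 0)
    (c2 : h12 * f1 - h23 * f3 - h24 * f4 = 0)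
    (c3 : h13 * f1 + h23 * f2 - h34 * f4 = 0)
    (c4 : h14 * f1 + h24 * f2 + h34 * f3 = 0) :
    h12 = 0 ∧ h13 = 0 ∧ h14 = 0 ∧ h23 = 0 ∧ h24 = 0 ∧ h34 = 0 := by
  obtain ⟨rfl, h23', h24'⟩ := syzygy_eq_zero b12 b23.neg b24.neg (by linear_combination c2)
  obtain rfl := neg_eq_zero.1 h23'
  obtain rfl := neg_eq_zero.1 h24'
  obtain ⟨rfl, -, h34'⟩ :=
    syzygy_eq_zero b13 (IsBihom.zero 3 2) b34.neg (by linear_combination c3)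
  obtain rfl := neg_eq_zero.1 h34'
  obtain ⟨rfl, -, -⟩ :=
    syzygy_eq_zero b14 (IsBihom.zero 3 2) (IsBihom.zero 3 2) (by linear_combination c4)
  exact ⟨rfl, rfl, rfl, rfl, rfl, rfl⟩
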